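/- Let n be an even integer with n ≥ 6 and let C ∈ Ω_n. Define X ∈ Ω_n by X_{i,j} = (2(n−1)/(n−2))·μ_element(C) + C_{i,j} − (⟨R_i,C⟩ + ⟨R_j,C⟩)/(n−2) for i ≠ j (and X_{i,i} = 0). Then X minimizes the element variance over the equivalence class of C: for every Y ∈ Ω_n with Y ~ C, σ²_element(X,X) ≤ σ²_element(Y,Y). -/

import Mathlib

open Finset

def hollowSym {n : ℕ} (C : Matrix (Fin n) (Fin n) ℝ) : Prop :=
  C.IsSymm ∧ ∀ i, C i i = 0

noncomputable def innerH {n : ℕ} (X C : Matrix (Fin n) (Fin n) ℝ) : ℝ :=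
  (1 / 2) * ∑ i, ∑ j, X i j * C i j

noncomputable def adjR {n : ℕ} (i : Fin n) : Matrix (Fin n) (Fin n) ℝ :=
  Matrix.of fun k l => if k ≠ l ∧ (i = k ∨ i = l) then 1 else 0

def IsPairing {n : ℕ} (S : Matrix (Fin n) (Fin n) ℝ) : Prop :=
  S.IsSymm ∧ (∀ i, S i i = 0) ∧ (∀ i j, S i j = 0 ∨ S i j = 1) ∧ (∀ i, ∑ j, S i j = 1)

noncomputable def pairings (n : ℕ) : Finset (Matrix (Fin n) (Fin n) ℝ) :=
  (Finset.univ.filter (fun σ : Equiv.Perm (Fin n) => ∀ i, σ i ≠ i ∧ σ (σ i) = i)).image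
    (fun σ => Matrix.of fun i j => if σ i = j then (1 : ℝ) else 0)

noncomputable def pairSum {n : ℕ} (C : Matrix (Fin n) (Fin n) ℝ) : ℝ :=
  ∑ i, ∑ j ∈ Finset.univ.filter (fun j => i < j), C i j

noncomputable def muEl {n : ℕ} (C : Matrix (Fin n) (Fin n) ℝ) : ℝ :=
  (2 / ((n : ℝ) * ((n : ℝ) - 1))) * pairSum C

noncomputable def Jmat (n : ℕ) : Matrix (Fin n) (Fin n) ℝ := Matrix.of fun _ _ => 1

noncomputable def muSum (n : ℕ) (C : Matrix (Fin n) (Fin n) ℝ) : ℝ :=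
  (1 / (Nat.doubleFactorial (n - 1) : ℝ)) * ∑ S ∈ pairings n, innerH S C

noncomputable def sig2El {n : ℕ} (C : Matrix (Fin n) (Fin n) ℝ) : ℝ :=
  (2 / ((n : ℝ) * ((n : ℝ) - 1))) *
    ∑ i, ∑ j ∈ Finset.univ.filter (fun j => i < j), (C i j - muEl C) ^ 2

noncomputable def sig2Sum (n : ℕ) (C : Matrix (Fin n) (Fin n) ℝ) : ℝ :=
  (1 / (Nat.doubleFactorial (n - 1) : ℝ)) *
    ∑ S ∈ pairings n, (innerH S C - muSum n C) ^ 2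

/-! Since pairings can be re-routed on any four indices, `Y ~ C` forces
`D i j + D k l = D i k + D j l` for `D = Y - C` and distinct `i, j, k, l`, hence
`D i j = a i + a j` off the diagonal: `a i` is the Gromov product `(D i q + D i r - D q r) / 2`,
which does not depend on `q` and `r`. The matrix `X` is the member of this affine family all of
whose row sums are equal, so the deviations `X i j - μ` have zero row sums. They are therefore
orthogonal to every matrix `e i + e j`, and `X` minimizes the variance by Pythagoras. -/

section Pairing

variable {ι κ : Type*}

/-- A fixed-point-free involution of `ι`: the pairings of `ι` viewed as permutations. -/
structure IsPairingPerm (σ : Equiv.Perm ι) : Prop where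
  involutive : Function.Involutive σ
  apply_ne (i : ι) : σ i ≠ i

theorem IsPairingPerm.permCongr {σ : Equiv.Perm ι} (hσ : IsPairingPerm σ) (e : ι ≃ κ) :
    IsPairingPerm (e.permCongr σ) where
  involutive i := by simp [hσ.involutive (e.symm i)]
  apply_ne i h := hσ.apply_ne (e.symm i) (e.eq_symm_apply.2 h)

theorem exists_isPairingPerm [Fintype ι] (h : Even (Fintype.card ι)) :
    ∃ σ : Equiv.Perm ι, IsPairingPerm σ := by
  obtain ⟨m, hm⟩ := h
  have e : Fin m ⊕ Fin m ≃ ι := Fintype.equivOfCardEq (by simp [hm])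
  have h_swap : IsPairingPerm (Equiv.sumComm (Fin m) (Fin m)) :=
    ⟨Sum.swap_swap, by rintro (i | i) <;> simp⟩
  exact ⟨_, h_swap.permCongr e⟩

theorem permCongr_swap_apply_eq [DecidableEq ι] {σ : Equiv.Perm ι} {i j : ι} (hi : σ i ≠ i)
    (hij : i ≠ j) : (Equiv.swap (σ i) j).permCongr σ i = j := by
  simp [Equiv.swap_apply_of_ne_of_ne hi.symm hij]

theorem exists_isPairingPerm_apply_eq_and_apply_eq [Fintype ι] (h : Even (Fintype.card ι))
    {i j k l : ι} (hij : i ≠ j) (hik : i ≠ k) (hil : i ≠ l) (hjk : j ≠ k) (hjl : j ≠ l)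
    (hkl : k ≠ l) : ∃ σ : Equiv.Perm ι, IsPairingPerm σ ∧ σ i = j ∧ σ k = l := by
  classical
  obtain ⟨ρ, hρ⟩ := exists_isPairingPerm h
  obtain ⟨σ, hσ, hσi⟩ : ∃ σ : Equiv.Perm ι, IsPairingPerm σ ∧ σ i = j :=
    ⟨_, hρ.permCongr _, permCongr_swap_apply_eq (hρ.apply_ne i) hij⟩
  have hi : i ≠ σ k := fun h ↦ hjk (by rw [← hσi, h, hσ.involutive])
  have hj : j ≠ σ k := fun h ↦ hik (σ.injective (hσi.trans h))
  refine ⟨_, hσ.permCongr (Equiv.swap (σ k) l), ?_, permCongr_swap_apply_eq (hσ.apply_ne k) hkl⟩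
  simp [Equiv.swap_apply_of_ne_of_ne hi hil, hσi, Equiv.swap_apply_of_ne_of_ne hj hjl]

theorem IsPairingPerm.sum_apply_eq {R : Type*} [CommSemiring R] [Fintype ι] [DecidableEq ι]
    {σ : Equiv.Perm ι} (hσ : IsPairingPerm σ) {D : Matrix ι ι R} (hD : D.IsSymm) {i j k l : ι}
    (hσi : σ i = j) (hσk : σ k = l) (hik : i ≠ k) (hil : i ≠ l) :
    ∑ x, D x (σ x) = 2 * (D i j + D k l) + ∑ x ∈ ({i, j, k, l} : Finset ι)ᶜ, D x (σ x) := by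
  have hσj : σ j = i := by rw [← hσi, hσ.involutive]
  have hσl : σ l = k := by rw [← hσk, hσ.involutive]
  have hij : i ≠ j := fun h ↦ hσ.apply_ne i (hσi.trans h.symm)
  have hkl : k ≠ l := fun h ↦ hσ.apply_ne k (hσk.trans h.symm)
  have hjk : j ≠ k := fun h ↦ hil (by rw [← hσj, h, hσk])
  have hjl : j ≠ l := fun h ↦ hik (by rw [← hσj, h, hσl])
  rw [← Finset.sum_add_sum_compl {i, j, k, l}, sum_insert (by simp [hij, hik, hil]),
    sum_insert (by simp [hjk, hjl]), sum_pair hkl, hσi, hσj, hσk, hσl, hD.apply i j, hD.apply k l]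
  ring

end Pairing

section FourPoint

variable {ι K : Type*} [Field K]

/-- Equality in all cases of the four-point condition: for four distinct indices, the three sums of
`D` over the pairings of these indices agree. -/
def FourPointEq (D : Matrix ι ι K) : Prop :=
  ∀ ⦃i j k l : ι⦄, i ≠ j → i ≠ k → i ≠ l → j ≠ k → j ≠ l → k ≠ l → D i j + D k l = D i k + D j l

theorem fourPointEq_of_sum_pairingPerm_eq_zero [NeZero (2 : K)] [Fintype ι]
    (h_even : Even (Fintype.card ι)) {D : Matrix ι ι K} (hD : D.IsSymm)
    (h_sum : ∀ σ : Equiv.Perm ι, IsPairingPerm σ → ∑ x, D x (σ x) = 0) : FourPointEq D := by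
  classical
  intro i j k l hij hik hil hjk hjl hkl
  obtain ⟨σ, hσ, hσi, hσk⟩ :=
    exists_isPairingPerm_apply_eq_and_apply_eq h_even hij hik hil hjk hjl hkl
  have hσl : σ l = k := by rw [← hσk, hσ.involutive]
  set τ := (Equiv.swap j k).permCongr σ with hτ_def
  have hτ : IsPairingPerm τ := hσ.permCongr _
  have hτi : τ i = k := by simp [hτ_def, Equiv.swap_apply_of_ne_of_ne hij hik, hσi]
  have hτj : τ j = l := by simp [hτ_def, hσk, Equiv.swap_apply_of_ne_of_ne hjl.symm hkl.symm]
  have h_rest : ∑ x ∈ ({i, j, k, l} : Finset ι)ᶜ, D x (σ x)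
      = ∑ x ∈ ({i, k, j, l} : Finset ι)ᶜ, D x (τ x) := by
    rw [Finset.insert_comm j k]
    refine sum_congr rfl fun x hx ↦ ?_
    simp only [mem_compl, mem_insert, mem_singleton, not_or] at hx
    obtain ⟨hxi, hxk, hxj, hxl⟩ := hx
    have hσxj : σ x ≠ j := fun h ↦ hxi (σ.injective (h.trans hσi.symm))
    have hσxk : σ x ≠ k := fun h ↦ hxl (σ.injective (h.trans hσl.symm))
    simp [hτ_def, Equiv.swap_apply_of_ne_of_ne hxj hxk, Equiv.swap_apply_of_ne_of_ne hσxj hσxk]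
  have h_σ := hσ.sum_apply_eq hD hσi hσk hik hil
  have h_τ := hτ.sum_apply_eq hD hτi hτj hij hil
  rw [h_sum σ hσ] at h_σ
  rw [h_sum τ hτ] at h_τ
  refine mul_left_cancel₀ (two_ne_zero' K) ?_
  linear_combination h_τ - h_σ - h_rest

/-- The Gromov product `(q | r)` with respect to the base point `p`, for the "distance" `D`. -/
def gromovProduct (D : Matrix ι ι K) (p q r : ι) : K :=
  (D p q + D p r - D q r) / 2

theorem gromovProduct_comm {D : Matrix ι ι K} (hD : D.IsSymm) (p q r : ι) :
    gromovProduct D p q r = gromovProduct D p r q := by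
  rw [gromovProduct, gromovProduct, hD.apply r q, add_comm]

theorem gromovProduct_add_gromovProduct [NeZero (2 : K)] {D : Matrix ι ι K} (hD : D.IsSymm)
    (p q r : ι) : gromovProduct D p q r + gromovProduct D q p r = D p q := by
  have h2 := two_ne_zero' K
  rw [gromovProduct, gromovProduct, hD.apply p q]
  field_simp
  ring

theorem FourPointEq.gromovProduct_right {D : Matrix ι ι K} (h : FourPointEq D) (hD : D.IsSymm)
    {p q r r' : ι} (hpq : p ≠ q) (hpr : p ≠ r) (hpr' : p ≠ r') (hqr : q ≠ r) (hqr' : q ≠ r') :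
    gromovProduct D p q r = gromovProduct D p q r' := by
  obtain rfl | hrr' := eq_or_ne r r'
  · rfl
  have key := h hpr hpr' hpq hrr' hqr.symm hqr'.symm
  rw [hD.apply q r', hD.apply q r] at key
  rw [gromovProduct, gromovProduct]
  linear_combination key / 2

theorem FourPointEq.gromovProduct_eq {D : Matrix ι ι K} (h : FourPointEq D) (hD : D.IsSymm)
    {p q r q' r' : ι} (hpq : p ≠ q) (hpr : p ≠ r) (hqr : q ≠ r) (hpq' : p ≠ q') (hpr' : p ≠ r')
    (hqr' : q' ≠ r') : gromovProduct D p q r = gromovProduct D p q' r' := by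
  obtain rfl | hqq' := eq_or_ne q q'
  · exact h.gromovProduct_right hD hpq hpr hpr' hqr hqr'
  calc gromovProduct D p q r
      = gromovProduct D p q q' := h.gromovProduct_right hD hpq hpr hpq' hqr hqq'
    _ = gromovProduct D p q' q := gromovProduct_comm hD ..
    _ = gromovProduct D p q' r' := h.gromovProduct_right hD hpq' hpq hpr' hqq'.symm hqr'

theorem FourPointEq.exists_apply_eq_add [NeZero (2 : K)] (h_card : 3 ≤ Cardinal.mk ι)
    {D : Matrix ι ι K} (h : FourPointEq D) (hD : D.IsSymm) :
    ∃ a : ι → K, ∀ i j, i ≠ j → D i j = a i + a j := by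
  have h_third (i j : ι) : ∃ r, i ≠ r ∧ j ≠ r := by
    simpa only [ne_comm] using Cardinal.exists_ne_ne_of_three_le h_card i j
  have h_pair (i : ι) : ∃ q r, i ≠ q ∧ i ≠ r ∧ q ≠ r := by
    obtain ⟨q, hiq, -⟩ := h_third i i
    obtain ⟨r, hir, hqr⟩ := h_third i q
    exact ⟨q, r, hiq, hir, hqr⟩
  choose q r hq hr hqr using h_pair
  refine ⟨fun i ↦ gromovProduct D i (q i) (r i), fun i j hij ↦ ?_⟩
  obtain ⟨k, hik, hjk⟩ := h_third i j
  have hi := h.gromovProduct_eq hD (hq i) (hr i) (hqr i) hij hik hjk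
  have hj := h.gromovProduct_eq hD (hq j) (hr j) (hqr j) hij.symm hjk hik
  calc D i j
      = gromovProduct D i j k + gromovProduct D j i k :=
        (gromovProduct_add_gromovProduct hD i j k).symm
    _ = gromovProduct D i (q i) (r i) + gromovProduct D j (q j) (r j) := by rw [hi, hj]

end FourPoint

section VertexShift

variable {ι R : Type*} [AddCommGroup R]

/-- Off the diagonal, `B` arises from `A` by adding `a i + a j` to the entry `(i, j)`, for some
vertex weights `a`. -/
def IsVertexShift (A B : Matrix ι ι R) : Prop :=
  ∃ a : ι → R, ∀ i j, i ≠ j → B i j = A i j + (a i + a j)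

theorem IsVertexShift.symm {A B : Matrix ι ι R} (h : IsVertexShift A B) : IsVertexShift B A := by
  obtain ⟨a, ha⟩ := h
  refine ⟨-a, fun i j hij ↦ ?_⟩
  rw [ha i j hij, Pi.neg_apply, Pi.neg_apply]
  abel

theorem IsVertexShift.trans {A B C : Matrix ι ι R} (hAB : IsVertexShift A B)
    (hBC : IsVertexShift B C) : IsVertexShift A C := by
  obtain ⟨a, ha⟩ := hAB
  obtain ⟨b, hb⟩ := hBC
  refine ⟨a + b, fun i j hij ↦ ?_⟩
  rw [hb i j hij, ha i j hij, Pi.add_apply, Pi.add_apply]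
  abel

end VertexShift

section PairingEquiv

variable {n : ℕ}

/-- The relation `A ~ B`: the matrices `A` and `B` have the same sum over every pairing. -/
def PairingEquiv (A B : Matrix (Fin n) (Fin n) ℝ) : Prop :=
  ∀ S, IsPairing S → innerH S A = innerH S B

theorem isPairing_permMatrix {σ : Equiv.Perm (Fin n)} (hσ : IsPairingPerm σ) :
    IsPairing (σ.permMatrix ℝ) := by
  have h_inv : σ⁻¹ = σ := Equiv.ext fun i ↦ σ.symm_apply_eq.2 (hσ.involutive i).symm
  refine ⟨?_, fun i ↦ ?_, fun i j ↦ ?_, fun i ↦ ?_⟩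
  · rw [Matrix.IsSymm, Matrix.transpose_permMatrix, h_inv]
  · simp [hσ.apply_ne i]
  · simp [PEquiv.toMatrix_apply, em']
  · simp [PEquiv.toMatrix_apply]

theorem innerH_permMatrix (σ : Equiv.Perm (Fin n)) (A : Matrix (Fin n) (Fin n) ℝ) :
    innerH (σ.permMatrix ℝ) A = 1 / 2 * ∑ i, A i (σ i) := by
  simp [innerH, PEquiv.toMatrix_apply]

theorem PairingEquiv.isVertexShift (hn : 2 < n) (h_even : Even n) {A B : Matrix (Fin n) (Fin n) ℝ}
    (hA : A.IsSymm) (hB : B.IsSymm) (h : PairingEquiv A B) : IsVertexShift A B := by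
  have h_sum (σ : Equiv.Perm (Fin n)) (hσ : IsPairingPerm σ) : ∑ x, (B - A) x (σ x) = 0 := by
    have hσ_eq := h _ (isPairing_permMatrix hσ)
    rw [innerH_permMatrix, innerH_permMatrix] at hσ_eq
    simp only [Matrix.sub_apply, sum_sub_distrib]
    linarith
  have h_four : FourPointEq (B - A) :=
    fourPointEq_of_sum_pairingPerm_eq_zero (by simpa using h_even) (hB.sub hA) h_sum
  obtain ⟨a, ha⟩ := h_four.exists_apply_eq_add (by simpa using mod_cast hn) (hB.sub hA)
  exact ⟨a, fun i j hij ↦ by rw [← ha i j hij, Matrix.sub_apply, add_sub_cancel]⟩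

end PairingEquiv

section RowSums

theorem sum_compl_singleton_add_eq {ι R : Type*} [Fintype ι] [DecidableEq ι] [CommRing R]
    (a : ι → R) (i : ι) :
    ∑ j ∈ {i}ᶜ, (a i + a j) = (Fintype.card ι - 2) * a i + ∑ j, a j := by
  rw [sum_add_distrib, sum_const, card_compl, card_singleton, nsmul_eq_mul,
    Nat.cast_pred (Fintype.card_pos_iff.2 ⟨i⟩), Fintype.sum_eq_add_sum_compl i a]
  ring

theorem sum_sum_Ioi_mul_add_eq_zero {ι R : Type*} [LinearOrder ι] [Fintype ι]
    [LocallyFiniteOrderTop ι] [LocallyFiniteOrderBot ι] [CommSemiring R]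
    {D : Matrix ι ι R} (hD : D.IsSymm) (h_row : ∀ i, ∑ j ∈ {i}ᶜ, D i j = 0) (a : ι → R) :
    ∑ i, ∑ j ∈ Ioi i, D i j * (a i + a j) = 0 := by
  calc ∑ i, ∑ j ∈ Ioi i, D i j * (a i + a j)
      = ∑ i, ∑ j ∈ Ioi i, (a i * D i j + a j * D j i) := by
        refine sum_congr rfl fun i _ ↦ sum_congr rfl fun j _ ↦ ?_
        rw [hD.apply i j]
        ring
    _ = ∑ i, ∑ j ∈ {i}ᶜ, a i * D i j :=
        sum_sum_Ioi_add_eq_sum_sum_off_diag fun j i ↦ a i * D i j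
    _ = 0 := by simp only [← mul_sum, h_row, mul_zero, sum_const_zero]

variable {n : ℕ} {C X Y : Matrix (Fin n) (Fin n) ℝ}

theorem hollowSym.sum_compl_singleton (hC : hollowSym C) (i : Fin n) :
    ∑ j ∈ {i}ᶜ, C i j = ∑ j, C i j := by
  rw [Fintype.sum_eq_add_sum_compl i, hC.2 i, zero_add]

theorem hollowSym.two_mul_pairSum (hC : hollowSym C) : 2 * pairSum C = ∑ i, ∑ j, C i j := by
  calc 2 * pairSum C
      = ∑ i, ∑ j ∈ Ioi i, (C i j + C j i) := by
        simp only [pairSum, filter_lt_eq_Ioi, hC.1.apply, mul_sum, two_mul]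
    _ = ∑ i, ∑ j ∈ {i}ᶜ, C i j := sum_sum_Ioi_add_eq_sum_sum_off_diag fun j i ↦ C i j
    _ = ∑ i, ∑ j, C i j := sum_congr rfl fun i _ ↦ hC.sum_compl_singleton i

theorem hollowSym.sum_sum_eq (hn : 2 ≤ n) (hC : hollowSym C) :
    ∑ i, ∑ j, C i j = n * (n - 1) * muEl C := by
  have hn' : (2 : ℝ) ≤ n := by exact_mod_cast hn
  have hn0 : (n : ℝ) ≠ 0 := by linarith
  have hn1 : (n : ℝ) - 1 ≠ 0 := by linarith
  rw [muEl, ← hC.two_mul_pairSum]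
  field_simp

theorem hollowSym.eq_of_forall_sum_eq (hn : 2 ≤ n) (hX : hollowSym X) {r : ℝ}
    (h_row : ∀ i, ∑ j, X i j = r) : r = (n - 1) * muEl X := by
  have hn0 : (n : ℝ) ≠ 0 := by positivity
  have h_total := hX.sum_sum_eq hn
  simp only [h_row, sum_const, card_univ, Fintype.card_fin, nsmul_eq_mul, mul_assoc] at h_total
  exact mul_left_cancel₀ hn0 h_total

theorem sum_compl_singleton_sub_muEl_eq_zero (hn : 2 ≤ n) (hX : hollowSym X) {r : ℝ}
    (h_row : ∀ i, ∑ j, X i j = r) (i : Fin n) : ∑ j ∈ {i}ᶜ, (X i j - muEl X) = 0 := by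
  rw [sum_sub_distrib, hX.sum_compl_singleton, h_row, hX.eq_of_forall_sum_eq hn h_row, sum_const,
    card_compl, card_singleton, Fintype.card_fin, nsmul_eq_mul, Nat.cast_pred (by lia), sub_self]

theorem sig2El_le_sig2El
    (h : ∑ i, ∑ j ∈ Ioi i, (X i j - muEl X) ^ 2 ≤ ∑ i, ∑ j ∈ Ioi i, (Y i j - muEl Y) ^ 2) :
    sig2El X ≤ sig2El Y := by
  have h_coeff : (0 : ℝ) ≤ 2 / (n * (n - 1)) := by
    rw [← inv_div, ← Nat.cast_choose_two]
    positivity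
  simpa only [sig2El, filter_lt_eq_Ioi] using mul_le_mul_of_nonneg_left h h_coeff

theorem sig2El_le_of_isVertexShift (hn : 2 ≤ n) (hX : hollowSym X) {r : ℝ}
    (h_row : ∀ i, ∑ j, X i j = r) (h : IsVertexShift X Y) : sig2El X ≤ sig2El Y := by
  obtain ⟨a, ha⟩ := h
  set e : Fin n → ℝ := fun i ↦ a i - (muEl Y - muEl X) / 2 with he_def
  have h_dev (i j : Fin n) (hij : i ≠ j) : Y i j - muEl Y = X i j - muEl X + (e i + e j) := by
    rw [ha i j hij, he_def]
    ring
  have h_orth : ∑ i, ∑ j ∈ Ioi i, (X i j - muEl X) * (e i + e j) = 0 :=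
    sum_sum_Ioi_mul_add_eq_zero (D := X - Matrix.of fun _ _ ↦ muEl X) (hX.1.sub rfl)
      (sum_compl_singleton_sub_muEl_eq_zero hn hX h_row) e
  refine sig2El_le_sig2El ?_
  calc ∑ i, ∑ j ∈ Ioi i, (X i j - muEl X) ^ 2
      ≤ ∑ i, ∑ j ∈ Ioi i, ((X i j - muEl X) ^ 2 + (e i + e j) ^ 2) := by
        gcongr
        exact le_add_of_nonneg_right (sq_nonneg _)
    _ = ∑ i, ∑ j ∈ Ioi i, ((X i j - muEl X) ^ 2 + (e i + e j) ^ 2)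
          + 2 * ∑ i, ∑ j ∈ Ioi i, (X i j - muEl X) * (e i + e j) := by
        rw [h_orth, mul_zero, add_zero]
    _ = ∑ i, ∑ j ∈ Ioi i, (X i j - muEl X + (e i + e j)) ^ 2 := by
        simp only [mul_sum, ← sum_add_distrib]
        refine sum_congr rfl fun i _ ↦ sum_congr rfl fun j _ ↦ ?_
        ring
    _ = ∑ i, ∑ j ∈ Ioi i, (Y i j - muEl Y) ^ 2 := by
        refine sum_congr rfl fun i _ ↦ sum_congr rfl fun j hj ↦ ?_
        rw [h_dev i j (mem_Ioi.1 hj).ne]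

end RowSums

section MinVarRep

variable {n : ℕ} {C : Matrix (Fin n) (Fin n) ℝ}

theorem innerH_adjR (hC : hollowSym C) (i : Fin n) : innerH (adjR i) C = ∑ j, C i j := by
  have h_entry (k l : Fin n) :
      adjR i k l * C k l = (if i = k then C k l else 0) + (if i = l then C k l else 0) := by
    obtain rfl | hkl := eq_or_ne k l
    · simp [hC.2]
    · rw [adjR, Matrix.of_apply]
      grind
  calc innerH (adjR i) C
      = 1 / 2 * (∑ j, C i j + ∑ j, C j i) := by
        simp [innerH, h_entry, sum_add_distrib, sum_ite_irrel]
    _ = ∑ j, C i j := by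
        simp only [hC.1.apply]
        ring

/-- The matrix `X` of the theorem: the minimizer of the element variance over the class of `C`. -/
noncomputable def minVarRep (C : Matrix (Fin n) (Fin n) ℝ) : Matrix (Fin n) (Fin n) ℝ :=
  Matrix.of fun i j ↦
    if i = j then 0
    else (2 * ((n : ℝ) - 1) / ((n : ℝ) - 2)) * muEl C + C i j
      - (innerH (adjR i) C + innerH (adjR j) C) / ((n : ℝ) - 2)

/-- The vertex weights that turn `C` into `minVarRep C`. -/
noncomputable def minVarWeight (C : Matrix (Fin n) (Fin n) ℝ) (i : Fin n) : ℝ :=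
  ((n - 1) * muEl C - innerH (adjR i) C) / (n - 2)

theorem minVarRep_apply_of_ne (C : Matrix (Fin n) (Fin n) ℝ) {i j : Fin n} (hij : i ≠ j) :
    minVarRep C i j = C i j + (minVarWeight C i + minVarWeight C j) := by
  rw [minVarRep, Matrix.of_apply, if_neg hij, minVarWeight, minVarWeight]
  ring

theorem isVertexShift_minVarRep (C : Matrix (Fin n) (Fin n) ℝ) : IsVertexShift C (minVarRep C) :=
  ⟨minVarWeight C, fun _ _ ↦ minVarRep_apply_of_ne C⟩

theorem hollowSym_minVarRep (hC : hollowSym C) : hollowSym (minVarRep C) := by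
  refine ⟨Matrix.IsSymm.ext fun i j ↦ ?_, fun i ↦ by simp [minVarRep]⟩
  obtain rfl | hij := eq_or_ne i j
  · rfl
  · rw [minVarRep_apply_of_ne C hij, minVarRep_apply_of_ne C hij.symm, hC.1.apply,
      add_comm (minVarWeight C j)]

theorem sum_minVarWeight (hn : 2 ≤ n) (hC : hollowSym C) : ∑ i, minVarWeight C i = 0 := by
  simp only [minVarWeight, ← sum_div, sum_sub_distrib, innerH_adjR hC, hC.sum_sum_eq hn, sum_const,
    card_univ, Fintype.card_fin, nsmul_eq_mul, mul_assoc, sub_self, zero_div]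

theorem sum_minVarRep (hn : 2 < n) (hC : hollowSym C) (i : Fin n) :
    ∑ j, minVarRep C i j = (n - 1) * muEl C := by
  have hn2 : (n : ℝ) - 2 ≠ 0 := sub_ne_zero.2 (by exact_mod_cast hn.ne')
  calc ∑ j, minVarRep C i j
      = ∑ j ∈ {i}ᶜ, (C i j + (minVarWeight C i + minVarWeight C j)) := by
        rw [← (hollowSym_minVarRep hC).sum_compl_singleton]
        refine sum_congr rfl fun j hj ↦ minVarRep_apply_of_ne C ?_
        simpa [eq_comm] using hj
    _ = innerH (adjR i) C + (n - 2) * minVarWeight C i := by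
        rw [sum_add_distrib, hC.sum_compl_singleton, innerH_adjR hC, sum_compl_singleton_add_eq,
          sum_minVarWeight hn.le hC, Fintype.card_fin, add_zero]
    _ = (n - 1) * muEl C := by
        rw [minVarWeight, mul_div_cancel₀ _ hn2]
        ring

end MinVarRep

theorem stmt18_general {n : ℕ} (hn : 4 ≤ n) (h_even : Even n) {C Y : Matrix (Fin n) (Fin n) ℝ}
    (hC : hollowSym C) (hY : hollowSym Y) (hYC : PairingEquiv Y C) :
    sig2El (minVarRep C) ≤ sig2El Y := by
  have h_shift : IsVertexShift (minVarRep C) Y :=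
    ((hYC.isVertexShift (by lia) h_even hY.1 hC.1).trans (isVertexShift_minVarRep C)).symm
  exact sig2El_le_of_isVertexShift (by lia) (hollowSym_minVarRep hC) (sum_minVarRep (by lia) hC)
    h_shift

theorem stmt18 (n : ℕ) (hn : 6 ≤ n) (he : Even n) (C : Matrix (Fin n) (Fin n) ℝ)
    (hC : hollowSym C) (X : Matrix (Fin n) (Fin n) ℝ)
    (hX : X = Matrix.of fun i j =>
      if i = j then 0
      else (2 * ((n : ℝ) - 1) / ((n : ℝ) - 2)) * muEl C + C i j
        - (innerH (adjR i) C + innerH (adjR j) C) / ((n : ℝ) - 2)) :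
    ∀ Y : Matrix (Fin n) (Fin n) ℝ, hollowSym Y →
      (∀ S, IsPairing S → innerH S Y = innerH S C) → sig2El X ≤ sig2El Y := by
  subst hX
  exact fun Y hY hYC ↦ stmt18_general (by lia) he hC hY hYC
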